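/- Let a, b, c, d : ℝ → ℝ with a, c, d continuously differentiable, b continuous, a(t) ≠ 0 on an open interval I, and Q(t) = 4ab + (a′/a − c − d)(c+d) − c′ − d′. Let κ₁, κ₂ : I → ℝ be twice continuously differentiable nonvanishing solutions of κᵢ′′ − (a′/a)κᵢ′ + Qκᵢ = C₀⁽ⁱ⁾(2a)²/κᵢ³ (i = 1, 2) with real constants C₀⁽¹⁾, C₀⁽²⁾, and set W = κ₁κ₂′ − κ₁′κ₂. Then for all t ∈ I: d/dt[(κ₂/κ₁)·(W/(2a))] = (2a/κ₁²)·[(W/(2a))² − C₀⁽¹⁾(κ₂/κ₁)² + C₀⁽²⁾(κ₁/κ₂)²]. -/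

import Mathlib

/-- Q(t) = 4ab + (a′/a − c − d)(c+d) − c′ − d′. -/
noncomputable def Qfun (a b c d : ℝ → ℝ) (t : ℝ) : ℝ :=
  4 * a t * b t + (deriv a t / a t - c t - d t) * (c t + d t) - deriv c t - deriv d t

/-- The Wronskian W = κ₁κ₂′ − κ₁′κ₂. -/
noncomputable def Wfun (κ₁ κ₂ : ℝ → ℝ) (t : ℝ) : ℝ :=
  κ₁ t * deriv κ₂ t - deriv κ₁ t * κ₂ t

/-!
With `ρ = 2a`, the first-order term of the equation is `-(ρ'/ρ)κ'`, so the weighted Wronskian `W/ρ`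
satisfies Abel's identity `(W/ρ)' = (κ₁f₂ - f₁κ₂)/ρ`, where `f₁`, `f₂` are the right-hand sides: the
potential `Q` cancels. Combined with `(κ₂/κ₁)' = W/κ₁²`, the product rule for `(κ₂/κ₁)(W/ρ)` gives
the claim.
-/

section Wronskian

variable {𝕜 : Type*} [NontriviallyNormedField 𝕜]
  {u u' v v' ρ : 𝕜 → 𝕜} {u'' v'' ρ' q f g t : 𝕜}

theorem hasDerivAt_wronskian
    (hu : HasDerivAt u (u' t) t) (hu' : HasDerivAt u' u'' t)
    (hv : HasDerivAt v (v' t) t) (hv' : HasDerivAt v' v'' t) :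
    HasDerivAt (fun s => u s * v' s - u' s * v s) (u t * v'' - u'' * v t) t := by
  convert! (hu.mul hv').sub (hu'.mul hv) using 1
  ring

theorem hasDerivAt_wronskian_div
    (hρ : HasDerivAt ρ ρ' t) (hρ0 : ρ t ≠ 0)
    (hu : HasDerivAt u (u' t) t) (hu' : HasDerivAt u' u'' t)
    (hv : HasDerivAt v (v' t) t) (hv' : HasDerivAt v' v'' t)
    (hu_ode : u'' - ρ' / ρ t * u' t + q * u t = f)
    (hv_ode : v'' - ρ' / ρ t * v' t + q * v t = g) :
    HasDerivAt (fun s => (u s * v' s - u' s * v s) / ρ s) ((u t * g - f * v t) / ρ t) t := by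
  convert! (hasDerivAt_wronskian hu hu' hv hv').div hρ hρ0 using 1
  rw [← hu_ode, ← hv_ode]
  field_simp
  ring

theorem hasDerivAt_div_eq_wronskian_div_sq
    (hu : HasDerivAt u (u' t) t) (hv : HasDerivAt v (v' t) t) (hu0 : u t ≠ 0) :
    HasDerivAt (fun s => v s / u s) ((u t * v' t - u' t * v t) / u t ^ 2) t := by
  convert! hv.div hu hu0 using 1
  ring

end Wronskian

theorem hasDerivAt_deriv_of_contDiffAt_two {𝕜 F : Type*} [NontriviallyNormedField 𝕜]
    [NormedAddCommGroup F] [NormedSpace 𝕜 F] {f : 𝕜 → F} {t : 𝕜} (hf : ContDiffAt 𝕜 2 f t) :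
    HasDerivAt (deriv f) (deriv (deriv f) t) t :=
  ((hf.derivWithin one_add_one_eq_two.le).differentiableAt one_ne_zero).hasDerivAt

theorem statement_15_general {𝕜 : Type*} [NontriviallyNormedField 𝕜]
    {ρ κ₁ κ₁' κ₂ κ₂' : 𝕜 → 𝕜} {ρ' κ₁'' κ₂'' q C₁ C₂ t : 𝕜}
    (hρ : HasDerivAt ρ ρ' t) (hρ0 : ρ t ≠ 0)
    (hκ₁ : HasDerivAt κ₁ (κ₁' t) t) (hκ₁' : HasDerivAt κ₁' κ₁'' t)
    (hκ₂ : HasDerivAt κ₂ (κ₂' t) t) (hκ₂' : HasDerivAt κ₂' κ₂'' t)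
    (hκ₁0 : κ₁ t ≠ 0) (hκ₂0 : κ₂ t ≠ 0)
    (hκ₁_ode : κ₁'' - ρ' / ρ t * κ₁' t + q * κ₁ t = C₁ * ρ t ^ 2 / κ₁ t ^ 3)
    (hκ₂_ode : κ₂'' - ρ' / ρ t * κ₂' t + q * κ₂ t = C₂ * ρ t ^ 2 / κ₂ t ^ 3) :
    HasDerivAt (fun s => κ₂ s / κ₁ s * ((κ₁ s * κ₂' s - κ₁' s * κ₂ s) / ρ s))
      (ρ t / κ₁ t ^ 2 * (((κ₁ t * κ₂' t - κ₁' t * κ₂ t) / ρ t) ^ 2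
        - C₁ * (κ₂ t / κ₁ t) ^ 2 + C₂ * (κ₁ t / κ₂ t) ^ 2)) t := by
  have h_ratio := hasDerivAt_div_eq_wronskian_div_sq hκ₁ hκ₂ hκ₁0
  have h_abel := hasDerivAt_wronskian_div hρ hρ0 hκ₁ hκ₁' hκ₂ hκ₂' hκ₁_ode hκ₂_ode
  convert! h_ratio.mul h_abel using 1
  field_simp
  ring

/-- for two nonvanishing solutions κ₁, κ₂ of
κᵢ′′ − (a′/a)κᵢ′ + Qκᵢ = C₀⁽ⁱ⁾(2a)²/κᵢ³ on an open interval (t₁,t₂),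
d/dt[(κ₂/κ₁)(W/(2a))] = (2a/κ₁²)[(W/(2a))² − C₀⁽¹⁾(κ₂/κ₁)² + C₀⁽²⁾(κ₁/κ₂)²]. -/
theorem statement_15
    (a b c d κ₁ κ₂ : ℝ → ℝ) (t₁ t₂ : ℝ) (C₀₁ C₀₂ : ℝ)
    (ha : ContDiff ℝ 1 a) (hc : ContDiff ℝ 1 c) (hd : ContDiff ℝ 1 d)
    (hb : Continuous b)
    (hane : ∀ t ∈ Set.Ioo t₁ t₂, a t ≠ 0)
    (hκ₁ : ContDiffOn ℝ 2 κ₁ (Set.Ioo t₁ t₂)) (hκ₂ : ContDiffOn ℝ 2 κ₂ (Set.Ioo t₁ t₂))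
    (hκ₁ne : ∀ t ∈ Set.Ioo t₁ t₂, κ₁ t ≠ 0) (hκ₂ne : ∀ t ∈ Set.Ioo t₁ t₂, κ₂ t ≠ 0)
    (hEq1 : ∀ t ∈ Set.Ioo t₁ t₂, deriv (deriv κ₁) t - (deriv a t / a t) * deriv κ₁ t
        + Qfun a b c d t * κ₁ t = C₀₁ * (2 * a t) ^ 2 / κ₁ t ^ 3)
    (hEq2 : ∀ t ∈ Set.Ioo t₁ t₂, deriv (deriv κ₂) t - (deriv a t / a t) * deriv κ₂ t
        + Qfun a b c d t * κ₂ t = C₀₂ * (2 * a t) ^ 2 / κ₂ t ^ 3) :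
    ∀ t ∈ Set.Ioo t₁ t₂,
      deriv (fun s => (κ₂ s / κ₁ s) * (Wfun κ₁ κ₂ s / (2 * a s))) t
        = (2 * a t / κ₁ t ^ 2) * ((Wfun κ₁ κ₂ t / (2 * a t)) ^ 2
            - C₀₁ * (κ₂ t / κ₁ t) ^ 2 + C₀₂ * (κ₁ t / κ₂ t) ^ 2) := by
  intro t ht
  have hI : Set.Ioo t₁ t₂ ∈ nhds t := Ioo_mem_nhds ht.1 ht.2
  have hκ₁t := hκ₁.contDiffAt hI
  have hκ₂t := hκ₂.contDiffAt hI
  have h_log_deriv : 2 * deriv a t / (2 * a t) = deriv a t / a t :=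
    mul_div_mul_left _ _ two_ne_zero
  exact (statement_15_general
    ((ha.differentiable one_ne_zero t).hasDerivAt.const_mul 2)
    (mul_ne_zero two_ne_zero (hane t ht))
    (hκ₁t.differentiableAt two_ne_zero).hasDerivAt (hasDerivAt_deriv_of_contDiffAt_two hκ₁t)
    (hκ₂t.differentiableAt two_ne_zero).hasDerivAt (hasDerivAt_deriv_of_contDiffAt_two hκ₂t)
    (hκ₁ne t ht) (hκ₂ne t ht)
    (h_log_deriv ▸ hEq1 t ht) (h_log_deriv ▸ hEq2 t ht)).deriv
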